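/- Let R be a behavior with input-value space 𝒰 and output-value space 𝒴, and S a behavior with input-value space 𝒴 and output-value space 𝒵. Let U₀ ⊆ 𝒰 and Y₀ ⊆ 𝒴, and suppose: R has Cauchy gain γ₁ on U₀; S has Cauchy gain γ₂ on Y₀; and whenever (ω,η) ∈ R with ω → U₀, necessarily η → Y₀. Then the cascade S ∘ R has Cauchy gain γ₂ ∘ γ₁ on U₀. -/

import Mathlib

open Filter Topology MeasureTheory
open scoped ENNReal NNReal

noncomputable def aa {M : Type*} [PseudoMetricSpace M] (ω : ℝ → M) : ℝ≥0∞ :=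
  Filter.limsup (fun p : ℝ × ℝ => edist (ω p.1) (ω p.2)) (Filter.atTop ×ˢ Filter.atTop)

def KInfty (γ : ℝ≥0 → ℝ≥0) : Prop :=
  Continuous γ ∧ StrictMono γ ∧ γ 0 = 0 ∧ Filter.Tendsto γ Filter.atTop Filter.atTop

noncomputable def extK (γ : ℝ≥0 → ℝ≥0) : ℝ≥0∞ → ℝ≥0∞ :=
  fun x => if x = ⊤ then ⊤ else ↑(γ x.toNNReal)

def CauchyGain {U Y : Type*} [PseudoMetricSpace U] [PseudoMetricSpace Y]
    (R : Set ((ℝ → U) × (ℝ → Y))) (γ : ℝ≥0 → ℝ≥0) : Prop :=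
  ∀ p ∈ R, aa p.2 ≤ extK γ (aa p.1)

def IncGain {U Y : Type*} [PseudoMetricSpace U] [PseudoMetricSpace Y]
    (R : Set ((ℝ → U) × (ℝ → Y))) (κ : ℝ≥0 → ℝ≥0) : Prop :=
  ∀ p₁ ∈ R, ∀ p₂ ∈ R, ∀ u₁ u₂ : U,
    Filter.Tendsto p₁.1 Filter.atTop (nhds u₁) → Filter.Tendsto p₂.1 Filter.atTop (nhds u₂) →
    Filter.limsup (fun t => edist (p₁.2 t) (p₂.2 t)) Filter.atTop ≤ ↑(κ (nndist u₁ u₂))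

def convTo {U : Type*} [PseudoMetricSpace U] (ω : ℝ → U) (U₀ : Set U) : Prop :=
  ∀ ε > 0, ∃ T : ℝ, 0 ≤ T ∧ ∀ t ≥ T, ∃ u' ∈ U₀, dist (ω t) u' ≤ ε

def omegaLim {U : Type*} [PseudoMetricSpace U] (ω : ℝ → U) : Set U :=
  {u | ∃ t : ℕ → ℝ, Filter.Tendsto t Filter.atTop Filter.atTop ∧
       Filter.Tendsto (fun i => ω (t i)) Filter.atTop (nhds u)}

def Precomp {U : Type*} [TopologicalSpace U] (ω : ℝ → U) : Prop :=
  ∃ K : Set U, IsCompact K ∧ ∀ t : ℝ, 0 ≤ t → ω t ∈ K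

def cascade {U Y Z : Type*} (R : Set ((ℝ → U) × (ℝ → Y))) (S : Set ((ℝ → Y) × (ℝ → Z))) :
    Set ((ℝ → U) × (ℝ → Z)) :=
  {p | ∃ η : ℝ → Y, (p.1, η) ∈ R ∧ (η, p.2) ∈ S}

def CauchyGainOn {U Y : Type*} [PseudoMetricSpace U] [PseudoMetricSpace Y]
    (R : Set ((ℝ → U) × (ℝ → Y))) (γ : ℝ≥0 → ℝ≥0) (U₀ : Set U) : Prop :=
  ∀ p ∈ R, convTo p.1 U₀ → aa p.2 ≤ extK γ (aa p.1)

def IncGainOn {U Y : Type*} [PseudoMetricSpace U] [PseudoMetricSpace Y]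
    (R : Set ((ℝ → U) × (ℝ → Y))) (κ : ℝ≥0 → ℝ≥0) (U₀ : Set U) : Prop :=
  ∀ p₁ ∈ R, ∀ p₂ ∈ R, ∀ u₁ u₂ : U, u₁ ∈ U₀ → u₂ ∈ U₀ →
    Filter.Tendsto p₁.1 Filter.atTop (nhds u₁) → Filter.Tendsto p₂.1 Filter.atTop (nhds u₂) →
    Filter.limsup (fun t => edist (p₁.2 t) (p₂.2 t)) Filter.atTop ≤ ↑(κ (nndist u₁ u₂))

def ZV {E : Type*} (X : Set E) (V : E → ℝ) : Set E := {x ∈ X | V x = 0}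

def UDecrease {E 𝒰 : Type*} [NormedAddCommGroup E] [NormedSpace ℝ E] [PseudoMetricSpace 𝒰]
    (X₀ X : Set E) (f : E → 𝒰 → E) (Uset : Set 𝒰) (V : E → ℝ) : Prop :=
  (∀ x ∈ X, 0 ≤ V x) ∧ ContinuousOn V X ∧
  (∀ a b : ℝ, 0 ≤ a → a ≤ b → IsCompact {x ∈ X | a ≤ V x ∧ V x ≤ b}) ∧
  (∀ x ∈ X, V x ≠ 0 → ∃ (W : Set E) (Vt : E → ℝ), IsOpen W ∧ x ∈ W ∧ W ⊆ X₀ ∧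
    ContDiffOn ℝ 1 Vt W ∧ (∀ z ∈ W ∩ X, Vt z = V z) ∧
    ∀ u ∈ Uset, fderiv ℝ Vt x (f x u) < 0)

section extK

variable {γ : ℝ≥0 → ℝ≥0}

@[simp]
theorem extK_top : extK γ ⊤ = ⊤ := by simp [extK]

@[simp]
theorem extK_coe (r : ℝ≥0) : extK γ r = γ r := by simp [extK]

theorem extK_comp (γ₂ γ₁ : ℝ≥0 → ℝ≥0) : extK (γ₂ ∘ γ₁) = extK γ₂ ∘ extK γ₁ := by
  funext x
  cases x <;> simp

theorem extK_monotone (hγ : Monotone γ) : Monotone (extK γ) := by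
  intro x y hxy
  cases y with
  | top => simp
  | coe s =>
    lift x to ℝ≥0 using ne_top_of_le_ne_top ENNReal.coe_ne_top hxy
    simpa using hγ (ENNReal.coe_le_coe.mp hxy)

end extK

theorem stmt9_general {𝒰 𝒴 𝒵 : Type*}
    [PseudoMetricSpace 𝒰] [PseudoMetricSpace 𝒴] [PseudoMetricSpace 𝒵]
    {R : Set ((ℝ → 𝒰) × (ℝ → 𝒴))} {S : Set ((ℝ → 𝒴) × (ℝ → 𝒵))}
    {U₀ : Set 𝒰} {Y₀ : Set 𝒴} {γ₁ γ₂ : ℝ≥0 → ℝ≥0} (hγ₂ : Monotone γ₂)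
    (hR : CauchyGainOn R γ₁ U₀) (hS : CauchyGainOn S γ₂ Y₀)
    (hprop : ∀ p ∈ R, convTo p.1 U₀ → convTo p.2 Y₀) :
    CauchyGainOn (cascade R S) (γ₂ ∘ γ₁) U₀ := by
  rintro ⟨ω, ζ⟩ ⟨η, hωη, hηζ⟩ hω
  have hη : convTo η Y₀ := hprop (ω, η) hωη hω
  calc
    aa ζ ≤ extK γ₂ (aa η) := hS (η, ζ) hηζ hη
    _ ≤ extK γ₂ (extK γ₁ (aa ω)) := extK_monotone hγ₂ (hR (ω, η) hωη hω)
    _ = extK (γ₂ ∘ γ₁) (aa ω) := by rw [extK_comp, Function.comp_apply]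

/-- relative gains compose along a cascade. -/
theorem stmt9 {𝒰 𝒴 𝒵 : Type*} [MetricSpace 𝒰] [MetricSpace 𝒴] [MetricSpace 𝒵]
    (R : Set ((ℝ → 𝒰) × (ℝ → 𝒴))) (S : Set ((ℝ → 𝒴) × (ℝ → 𝒵)))
    (U₀ : Set 𝒰) (Y₀ : Set 𝒴)
    (γ₁ γ₂ : ℝ≥0 → ℝ≥0) (hγ₁ : KInfty γ₁) (hγ₂ : KInfty γ₂)
    (hR : CauchyGainOn R γ₁ U₀) (hS : CauchyGainOn S γ₂ Y₀)
    (hprop : ∀ p ∈ R, convTo p.1 U₀ → convTo p.2 Y₀) :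
    CauchyGainOn (cascade R S) (γ₂ ∘ γ₁) U₀ :=
  stmt9_general hγ₂.2.1.monotone hR hS hprop
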